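/- There is an absolute constant c such that for every caching instance with cache size k ≥ 10, the AlternatingOracle strategy B satisfies E[OBJ_B] ≤ max{ 230·OPT + 60·√(60·η·OPT / k), c }, where the expectation is taken over the internal random choices of the algorithm and η = Σ_{t=1}^T |ν(t) − ω(t)| is the total prediction loss. -/

import Mathlib

namespace Caching

attribute [local instance low] Classical.propDecidable

/-- A run of a feasible eviction strategy on the request sequence `σ` with cache size `k`
and time horizon `T`.  `C t` is the cache after processing request `t` (with `C 0 = ∅`),
and `p t` is the page evicted at time `t` (meaningful at full-cache misses). -/
structure CacheRun (S : Type) [DecidableEq S] (k T : ℕ) (σ : ℕ → S) where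
  C : ℕ → Finset S
  p : ℕ → S
  init : C 0 = ∅
  card_le : ∀ t, (C t).card ≤ k
  hit : ∀ t, 1 ≤ t → t ≤ T → (σ t ∈ C (t - 1) ∨ (C (t - 1)).card < k) →
      C t = insert (σ t) (C (t - 1))
  evict_mem : ∀ t, 1 ≤ t → t ≤ T → σ t ∉ C (t - 1) → (C (t - 1)).card = k →
      p t ∈ C (t - 1)
  evict : ∀ t, 1 ≤ t → t ≤ T → σ t ∉ C (t - 1) → (C (t - 1)).card = k →
      C t = insert (σ t) ((C (t - 1)).erase (p t))

variable {S : Type} [DecidableEq S]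

/- `nextReq σ T t` is `ν(t)`: the first time `s > t` (with `s ≤ T`) at which the page
`σ t` is requested again, and `T + 1` if there is no such time. -/
open Classical in
noncomputable def nextReq (σ : ℕ → S) (T t : ℕ) : ℕ :=
  if h : ∃ s, t < s ∧ s ≤ T ∧ σ s = σ t then Nat.find h else T + 1

/-- The total prediction loss `η = Σ_{t=1}^T |ν(t) - ω(t)|`. -/
noncomputable def totalLoss (σ : ℕ → S) (T : ℕ) (ω : ℕ → ℕ) : ℕ :=
  ∑ t ∈ Finset.Icc 1 T, Nat.dist (nextReq σ T t) (ω t)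

/-- `I_Q(t)`: indices of the last requests (up to time `t`) of the currently cached pages. -/
noncomputable def lastIdx {k T : ℕ} {σ : ℕ → S} (R : CacheRun S k T σ) (t : ℕ) : Finset ℕ :=
  (Finset.Icc 1 t).filter fun i => σ i ∈ R.C t ∧ ∀ j ∈ Finset.Icc (i + 1) t, σ j ≠ σ i

/-- Time `t` is a full-cache miss (an eviction step). -/
def EvictStep {k T : ℕ} {σ : ℕ → S} (R : CacheRun S k T σ) (t : ℕ) : Prop :=
  1 ≤ t ∧ t ≤ T ∧ σ t ∉ R.C (t - 1) ∧ (R.C (t - 1)).card = k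

/-- At time `t` the run evicts the page whose last-request index is `i`. -/
def EvictsIdx {k T : ℕ} {σ : ℕ → S} (R : CacheRun S k T σ) (t i : ℕ) : Prop :=
  EvictStep R t ∧ i ∈ lastIdx R (t - 1) ∧ R.p t = σ i

/-- `OBJ_Q`: the number of cache misses of the run. -/
noncomputable def misses {k T : ℕ} {σ : ℕ → S} (R : CacheRun S k T σ) : ℕ :=
  ((Finset.Icc 1 T).filter fun t => σ t ∉ R.C (t - 1)).card

/-- Belady's algorithm: on a full-cache miss always evict the cached page with the
largest next-request time. -/
def IsBelady {k T : ℕ} {σ : ℕ → S} (A : CacheRun S k T σ) : Prop :=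
  ∀ t, EvictStep A t → ∀ i ∈ lastIdx A (t - 1), A.p t = σ i →
    ∀ j ∈ lastIdx A (t - 1), nextReq σ T j ≤ nextReq σ T i

/-- BlindOracle: on a full-cache miss always evict the cached page with the largest
predicted next-request time. -/
def IsBlindOracle {k T : ℕ} {σ : ℕ → S} (B : CacheRun S k T σ) (ω : ℕ → ℕ) : Prop :=
  ∀ t, EvictStep B t → ∀ i ∈ lastIdx B (t - 1), B.p t = σ i →
    ∀ j ∈ lastIdx B (t - 1), ω j ≤ ω i

/-- An eviction graph of a run: a directed graph on `{1,…,T}` whose every edge `(i, j)`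
corresponds to a distinct time (`time e`) at which the run made a mistake by evicting
page `σ j` while `i` was a strictly better eviction candidate in the cache. -/
structure EvictionGraph {k T : ℕ} {σ : ℕ → S} (R : CacheRun S k T σ) where
  E : Finset (ℕ × ℕ)
  time : ℕ × ℕ → ℕ
  time_inj : ∀ e ∈ E, ∀ e' ∈ E, time e = time e' → e = e'
  mistake : ∀ e ∈ E, EvictsIdx R (time e) e.2 ∧ e.1 ∈ lastIdx R (time e - 1) ∧
      nextReq σ T e.2 < nextReq σ T e.1

/-- The eviction at time `t` triggers the eviction at time `t'`: the page evicted
at `t` is next requested at `t' = ν(i)`, which is again an eviction step. -/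
def Triggers {k T : ℕ} {σ : ℕ → S} (R : CacheRun S k T σ) (t t' : ℕ) : Prop :=
  ∃ i, EvictsIdx R t i ∧ t' = nextReq σ T i ∧ ∃ j, EvictsIdx R t' j

/-- The eviction of the page with last-request index `i` triggers the eviction of the
page with last-request index `j` (at time `ν(i)`). -/
def TriggersIdx {k T : ℕ} {σ : ℕ → S} (R : CacheRun S k T σ) (i j : ℕ) : Prop :=
  (∃ t, EvictsIdx R t i) ∧ EvictsIdx R (nextReq σ T i) j

/-- The page requested at time `t` was never requested before. -/
def NewPage (σ : ℕ → S) (t : ℕ) : Prop := ∀ s, 1 ≤ s → s < t → σ s ≠ σ t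

/-- At time `t` the evicted page has the largest prediction among cached pages. -/
def BlindChoiceAt {k T : ℕ} {σ : ℕ → S} (R : CacheRun S k T σ) (ω : ℕ → ℕ) (t : ℕ) : Prop :=
  ∀ i ∈ lastIdx R (t - 1), R.p t = σ i → ∀ j ∈ lastIdx R (t - 1), ω j ≤ ω i

/-- Corrector's choice at time `t`: if some cached page has a provably wrong prediction
(`ω i < t`), evict such a page with minimal prediction; otherwise act as BlindOracle. -/
def CorrectorChoiceAt {k T : ℕ} {σ : ℕ → S} (R : CacheRun S k T σ) (ω : ℕ → ℕ) (t : ℕ) :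
    Prop :=
  ((∃ i ∈ lastIdx R (t - 1), ω i < t) →
    ∀ i ∈ lastIdx R (t - 1), R.p t = σ i →
      ω i < t ∧ ∀ j ∈ lastIdx R (t - 1), ω j < t → ω i ≤ ω j) ∧
  ((¬ ∃ i ∈ lastIdx R (t - 1), ω i < t) → BlindChoiceAt R ω t)

/-- The page requested at time `t` was last evicted (before `t`) at a step labeled with
strategy `s₀` (0 = BlindOracle, 1 = RandomAlg, 2 = Corrector). -/
def LastEvictedWith {k T : ℕ} {σ : ℕ → S} (R : CacheRun S k T σ) (strat : ℕ → Fin 3)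
    (t : ℕ) (s₀ : Fin 3) : Prop :=
  ∃ t₀, t₀ < t ∧ EvictStep R t₀ ∧ R.p t₀ = σ t ∧ strat t₀ = s₀ ∧
    ∀ t₁, t₀ < t₁ → t₁ < t → ¬(EvictStep R t₁ ∧ R.p t₁ = σ t)

/-- A run of the AlternatingOracle strategy (for a fixed realization of its random
choices), together with the labeling `strat` of which of the three strategies was used
at each eviction step: on a miss for a never-requested page use BlindOracle; if the
requested page was last evicted by BlindOracle use RandomAlg (an arbitrary cached page);
if by RandomAlg use Corrector; if by Corrector use BlindOracle. -/
def IsAlternatingOracle {k T : ℕ} {σ : ℕ → S} (R : CacheRun S k T σ) (ω : ℕ → ℕ)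
    (strat : ℕ → Fin 3) : Prop :=
  ∀ t, EvictStep R t →
    (NewPage σ t → strat t = 0 ∧ BlindChoiceAt R ω t) ∧
    (LastEvictedWith R strat t 0 → strat t = 1) ∧
    (LastEvictedWith R strat t 1 → strat t = 2 ∧ CorrectorChoiceAt R ω t) ∧
    (LastEvictedWith R strat t 2 → strat t = 0 ∧ BlindChoiceAt R ω t)

/-- AlternatingOracle driven by a seed `u` of uniform random values: at each eviction
step performed by RandomAlg at time `t`, the evicted page is the one whose last-request
index has rank `u t` among the `k` cached indices, so that for a uniformly random seed
the evicted page is uniform over the cache. -/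
def IsAlternatingOracleSeeded {k T : ℕ} {σ : ℕ → S} (R : CacheRun S k T σ) (ω : ℕ → ℕ)
    (strat : ℕ → Fin 3) (u : Fin (T + 1) → Fin k) : Prop :=
  IsAlternatingOracle R ω strat ∧
  ∀ t (h : EvictStep R t), strat t = 1 →
    ∀ i ∈ lastIdx R (t - 1), R.p t = σ i →
      ((lastIdx R (t - 1)).filter fun j => j < i).card =
        ((u ⟨t, Nat.lt_succ_of_le h.2.1⟩ : Fin k) : ℕ)

/-- The family of runs is adapted to the seeds: the behavior up to time `t` depends only
on the seed values with index at most `t` (the strategy is online). -/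
def Adapted {k T : ℕ} {σ : ℕ → S} (R : (Fin (T + 1) → Fin k) → CacheRun S k T σ)
    (strat : (Fin (T + 1) → Fin k) → ℕ → Fin 3) : Prop :=
  ∀ u u' t, (∀ s : Fin (T + 1), (s : ℕ) ≤ t → u s = u' s) →
    (R u).C t = (R u').C t ∧ (R u).p t = (R u').p t ∧ strat u t = strat u' t

/-- The probability of the outcome `x` for `T` i.i.d. Bernoulli(γ) random bits. -/
noncomputable def bernWeight (γ : ℝ) {T : ℕ} (x : Fin T → Bool) : ℝ :=
  ∏ i, if x i then γ else 1 - γ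

/-- `S(x, m)`: the number of ones among the first `m` coordinates of `x`. -/
noncomputable def scount {T : ℕ} (x : Fin T → Bool) (m : ℕ) : ℕ :=
  (Finset.univ.filter fun i : Fin T => (i : ℕ) < m ∧ x i).card

/-!
Compare AlternatingOracle's run `B` with any feasible run `A` through a matching that sends each
page held only by `A` to a page held only by `B`. It can be maintained over time so that a page
evicted by `B` inherits the partner of the page whose request caused the eviction, with `O(OPT)`
exceptions. Hence the evictions of a chain BlindOracle → RandomAlg → Corrector all share one
partner: a page `σ l` that stays in `B`'s cache throughout and that `A` has evicted. BlindOracle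
preferred another page to `σ l`, and so did Corrector; hence, unless one of those two pages has a
prediction off by more than `W`, the whole absence of the page evicted by RandomAlg lies in the
window of radius `W` around `ω l`. By the matching, absences with the same `l` are disjoint in time,
and there are at most `OPT` candidates for `l`.

A page evicted uniformly at random stays away for `k / 2` steps with probability at least `1 / 2`,
so up to a factor of two only such long absences count, and at most `O(1 + W / k)` of them fit in
one window. This bounds the expected number of random evictions by `O(OPT + W * OPT / k + η / W)`,
and `W ≈ √(η k / OPT)` balances the last two terms.
-/

open Finset

section Combinatorics

variable {α β ι : Type*}

lemma exists_injOn_extension {V D : Finset α} {E : Finset β} {f : α → β} (hVD : V ⊆ D)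
    (hmap : Set.MapsTo f V E) (hinj : Set.InjOn f V) (hcard : #D ≤ #E) :
    ∃ g : α → β, Set.EqOn g f V ∧ Set.MapsTo g D E ∧ Set.InjOn g D := by
  obtain ⟨E', hsub, hE', hcard'⟩ := exists_subsuperset_card_eq
    (image_subset_iff.2 hmap) ((card_image_of_injOn hinj).trans_le (card_le_card hVD)) hcard
  obtain ⟨e, he⟩ := Finset.exists_equiv_extend_of_card_eq (α := D) (t := E')
    (by rw [Fintype.card_coe, hcard']) (s := {x | (x : α) ∈ V}) (f := fun x => f x)
    (by rintro _ h
        obtain ⟨x, hx, rfl⟩ := mem_image.1 h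
        exact hsub (mem_image_of_mem f (mem_filter.1 hx).2))
    (fun x hx y hy h => Subtype.ext <|
      hinj (mem_filter.1 hx).2 (mem_filter.1 hy).2 h)
  refine ⟨fun x => if hx : x ∈ D then e ⟨x, hx⟩ else f x, fun x hx => ?_, fun x hx => ?_,
    fun x hx y hy hxy => ?_⟩
  · simp only [dif_pos (hVD hx)]
    exact he ⟨x, hVD hx⟩ (mem_filter.2 ⟨mem_univ _, hx⟩)
  · simp only [dif_pos (mem_coe.1 hx)]
    exact hE' (e _).2
  · simp only [dif_pos (mem_coe.1 hx), dif_pos (mem_coe.1 hy)] at hxy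
    exact congrArg Subtype.val (e.injective (Subtype.ext hxy))

lemma exists_seq_of_forall_exists_succ {P : ℕ → α → Prop} {Q : ℕ → α → α → Prop}
    (zero : ∃ a, P 0 a) (succ : ∀ t a, P t a → ∃ b, P (t + 1) b ∧ Q t a b) :
    ∃ F : ℕ → α, ∀ t, P t (F t) ∧ Q t (F t) (F (t + 1)) := by
  choose! next hnext using succ
  obtain ⟨a, ha⟩ := zero
  let F : ℕ → α := Nat.rec a next
  have hP (t : ℕ) : P t (F t) := by
    induction t with
    | zero => exact ha
    | succ t ih => exact (hnext t (F t) ih).1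
  exact ⟨F, fun t => ⟨hP t, (hnext t (F t) (hP t)).2⟩⟩

/-- If `P` does not look at coordinate `i`, and given the other coordinates at most `h` values of
coordinate `i` satisfy `Q`, then `Q` has conditional probability at most `h / #α` given `P`. -/
lemma card_filter_and_mul_card_le [Fintype ι] [DecidableEq ι] [Fintype α] (i : ι)
    {P Q : (ι → α) → Prop} [DecidablePred P] [DecidablePred Q] {h : ℕ}
    (hP : ∀ u v, P (Function.update u i v) ↔ P u)
    (hQ : ∀ u, P u → #{v | Q (Function.update u i v)} ≤ h) :
    #{u | P u ∧ Q u} * Fintype.card α ≤ #{u | P u} * h := by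
  calc #{u | P u ∧ Q u} * Fintype.card α
      = #(({u | P u ∧ Q u} : Finset (ι → α)) ×ˢ (univ : Finset α)) := by
        rw [card_product, card_univ]
    _ ≤ #(({u | P u} : Finset (ι → α)).sigma fun u => {v | Q (Function.update u i v)}) := by
      refine card_le_card_of_injOn (fun x : (ι → α) × α => ⟨Function.update x.1 i x.2, x.1 i⟩) ?_ ?_
      · rintro ⟨u, v⟩ huv
        simpa [hP] using huv
      · rintro ⟨u, v⟩ - ⟨u', v'⟩ - h
        obtain ⟨hupd, heq⟩ : Function.update u i v = Function.update u' i v' ∧ u i = u' i := by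
          simpa using h
        have hv : v = v' := by simpa using congrFun hupd i
        have hu : u = u' := by
          rw [← Function.update_eq_self i u, ← Function.update_idem v, hupd, heq]
          simp only [Function.update_idem, Function.update_eq_self]
        rw [hu, hv]
    _ ≤ #{u | P u} * h := by
      rw [card_sigma]
      exact sum_le_card_nsmul _ _ _ fun u hu => hQ u (mem_filter.1 hu).2

end Combinatorics

section Runs

variable {k T : ℕ} {σ : ℕ → S} {R : CacheRun S k T σ} {a b e i j s t : ℕ} {x : S}

namespace EvictStep

lemma page_mem (h : EvictStep R t) : R.p t ∈ R.C (t - 1) :=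
  R.evict_mem t h.1 h.2.1 h.2.2.1 h.2.2.2

lemma cache_eq (h : EvictStep R t) : R.C t = insert (σ t) ((R.C (t - 1)).erase (R.p t)) :=
  R.evict t h.1 h.2.1 h.2.2.1 h.2.2.2

lemma page_ne (h : EvictStep R t) : R.p t ≠ σ t :=
  ne_of_mem_of_not_mem h.page_mem h.2.2.1

lemma page_notMem (h : EvictStep R t) : R.p t ∉ R.C t := by
  rw [h.cache_eq]
  simp [h.page_ne]

end EvictStep

namespace CacheRun

lemma cache_eq_insert (h1 : 1 ≤ t) (hT : t ≤ T) (h : ¬ EvictStep R t) :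
    R.C t = insert (σ t) (R.C (t - 1)) := by
  refine R.hit t h1 hT ?_
  by_contra! hc
  exact h ⟨h1, hT, hc.1, (R.card_le _).antisymm hc.2⟩

lemma request_mem_cache (h1 : 1 ≤ t) (hT : t ≤ T) : σ t ∈ R.C t := by
  by_cases h : EvictStep R t
  · exact h.cache_eq ▸ mem_insert_self _ _
  · exact cache_eq_insert h1 hT h ▸ mem_insert_self _ _

lemma eq_request_or_mem_pred (h1 : 1 ≤ t) (hT : t ≤ T) (hx : x ∈ R.C t) :
    x = σ t ∨ x ∈ R.C (t - 1) := by
  by_cases h : EvictStep R t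
  · rw [h.cache_eq] at hx
    exact (mem_insert.1 hx).imp_right mem_of_mem_erase
  · rw [cache_eq_insert h1 hT h] at hx
    exact mem_insert.1 hx

lemma evicted_of_mem_of_notMem (h1 : 1 ≤ t) (hT : t ≤ T) (hx : x ∈ R.C (t - 1))
    (hx' : x ∉ R.C t) : EvictStep R t ∧ R.p t = x := by
  by_cases h : EvictStep R t
  · refine ⟨h, ?_⟩
    by_contra hne
    rw [h.cache_eq] at hx'
    exact hx' (mem_insert_of_mem (mem_erase.2 ⟨Ne.symm hne, hx⟩))
  · rw [cache_eq_insert h1 hT h] at hx'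
    exact absurd (mem_insert_of_mem hx) hx'

lemma notMem_of_not_requested (hx : x ∉ R.C a) (hab : a ≤ b) (hb : b ≤ T)
    (hr : ∀ s, a < s → s ≤ b → σ s ≠ x) : x ∉ R.C b := by
  induction b, hab using Nat.le_induction with
  | base => exact hx
  | succ b hab ih =>
    intro hc
    rcases eq_request_or_mem_pred (Nat.succ_pos b) hb hc with h | h
    · exact hr (b + 1) (by lia) le_rfl h.symm
    · exact ih (by lia) (fun s h1 h2 => hr s h1 (by lia)) h

lemma exists_request_of_mem (hT : t ≤ T) (hx : x ∈ R.C t) : ∃ s, 1 ≤ s ∧ s ≤ t ∧ σ s = x := by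
  by_contra! hc
  exact notMem_of_not_requested (a := 0) (by simp [R.init]) (Nat.zero_le t) hT hc hx

lemma card_eq_or_forall_request_mem (hT : t ≤ T) :
    #(R.C t) = k ∨ ∀ s, 1 ≤ s → s ≤ t → σ s ∈ R.C t := by
  induction t with
  | zero => exact .inr fun s h1 h2 => by lia
  | succ t ih =>
    by_cases he : EvictStep R (t + 1)
    · left
      have hmem : R.p (t + 1) ∈ R.C t := he.page_mem
      have hnot : σ (t + 1) ∉ R.C t := he.2.2.1
      have hfull : #(R.C t) = k := he.2.2.2
      rw [he.cache_eq, Nat.add_sub_cancel,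
        card_insert_of_notMem fun h => hnot (mem_of_mem_erase h),
        card_erase_add_one hmem, hfull]
    · have hC : R.C (t + 1) = insert (σ (t + 1)) (R.C t) :=
        cache_eq_insert (Nat.succ_pos t) hT he
      rcases ih (by lia) with h | h
      · left
        have hmem : σ (t + 1) ∈ R.C t := by
          by_contra hmem
          exact he ⟨Nat.succ_pos t, hT, hmem, h⟩
        rw [hC, insert_eq_of_mem hmem, h]
      · right
        intro s h1 h2
        rw [hC]
        rcases h2.eq_or_lt with rfl | h2
        · exact mem_insert_self _ _
        · exact mem_insert_of_mem (h s h1 (Nat.lt_succ_iff.1 h2))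

end CacheRun

lemma NewPage.notMem (hnew : NewPage σ t) (h1 : 1 ≤ t) (hT : t ≤ T) : σ t ∉ R.C (t - 1) := by
  intro h
  obtain ⟨s, hs1, hst, hs⟩ := CacheRun.exists_request_of_mem (by lia) h
  exact hnew s hs1 (by lia) hs

/-- The times of the cache misses of a run. -/
noncomputable def missSet (R : CacheRun S k T σ) : Finset ℕ :=
  {t ∈ Icc 1 T | σ t ∉ R.C (t - 1)}

lemma card_missSet (R : CacheRun S k T σ) : #(missSet R) = misses R := rfl

lemma mem_missSet : t ∈ missSet R ↔ (1 ≤ t ∧ t ≤ T) ∧ σ t ∉ R.C (t - 1) := by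
  simp only [missSet, mem_filter, mem_Icc]

lemma EvictStep.mem_missSet (h : EvictStep R t) : t ∈ missSet R :=
  Caching.mem_missSet.2 ⟨⟨h.1, h.2.1⟩, h.2.2.1⟩

lemma exists_mem_missSet_of_request (R : CacheRun S k T σ) (h1 : 1 ≤ t) (hT : t ≤ T) :
    ∃ s ∈ missSet R, σ s = σ t := by
  have hex : ∃ s, 1 ≤ s ∧ σ s = σ t := ⟨t, h1, rfl⟩
  obtain ⟨hs1, hs⟩ := Nat.find_spec hex
  have hle : Nat.find hex ≤ t := Nat.find_min' hex ⟨h1, rfl⟩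
  have hnew : NewPage σ (Nat.find hex) := fun r hr hlt h =>
    Nat.find_min hex hlt ⟨hr, h.trans hs⟩
  exact ⟨_, mem_missSet.2 ⟨⟨hs1, hle.trans hT⟩, hnew.notMem hs1 (hle.trans hT)⟩, hs⟩

lemma mem_lastIdx :
    i ∈ lastIdx R t ↔ 1 ≤ i ∧ i ≤ t ∧ σ i ∈ R.C t ∧ ∀ j, i < j → j ≤ t → σ j ≠ σ i := by
  simp only [lastIdx, mem_filter, mem_Icc, and_assoc, and_imp, Nat.succ_le_iff]

lemma eq_of_mem_lastIdx (hi : i ∈ lastIdx R t) (hj : j ∈ lastIdx R t) (h : σ i = σ j) :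
    i = j := by
  obtain ⟨-, hit, -, hi⟩ := mem_lastIdx.1 hi
  obtain ⟨-, hjt, -, hj⟩ := mem_lastIdx.1 hj
  rcases lt_trichotomy i j with hij | hij | hij
  · exact absurd h.symm (hi j hij hjt)
  · exact hij
  · exact absurd h (hj i hij hit)

lemma exists_mem_lastIdx (hT : t ≤ T) (hx : x ∈ R.C t) : ∃ i ∈ lastIdx R t, σ i = x := by
  obtain ⟨s, hs1, hst, rfl⟩ := CacheRun.exists_request_of_mem hT hx
  have hne : ({r ∈ Icc 1 t | σ r = σ s} : Finset ℕ).Nonempty :=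
    ⟨s, mem_filter.2 ⟨mem_Icc.2 ⟨hs1, hst⟩, rfl⟩⟩
  obtain ⟨i, hi, hmax⟩ := exists_max_image _ id hne
  simp only [mem_filter, mem_Icc, id, and_imp] at hi hmax
  obtain ⟨⟨hi1, hit⟩, hi⟩ := hi
  refine ⟨i, mem_lastIdx.2 ⟨hi1, hit, hi ▸ hx, fun j hij hjt h => ?_⟩, hi⟩
  exact hij.not_ge (hmax j (by lia) hjt (h.trans hi))

lemma EvictStep.exists_evictsIdx (h : EvictStep R t) : ∃ i, EvictsIdx R t i := by
  obtain ⟨i, hi, hpage⟩ := exists_mem_lastIdx (by have := h.2.1; lia) h.page_mem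
  exact ⟨i, h, hi, hpage.symm⟩

/-- The page evicted at time `t` is not requested strictly between `t` and `s`, hence it stays
outside the cache until time `s`. -/
structure AwayBefore (R : CacheRun S k T σ) (t s : ℕ) : Prop where
  evictStep : EvictStep R t
  lt : t < s
  ne : ∀ r, t < r → r < s → σ r ≠ R.p t

namespace AwayBefore

lemma notMem (h : AwayBefore R t s) (hta : t ≤ a) (has : a < s) (haT : a ≤ T) :
    R.p t ∉ R.C a :=
  CacheRun.notMem_of_not_requested h.evictStep.page_notMem hta haT
    fun r h1 h2 => h.ne r h1 (h2.trans_lt has)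

lemma left_unique {s' : ℕ} (ha : AwayBefore R a s) (hb : AwayBefore R b s') (hbs : b < s)
    (has' : a < s') (h : R.p a = R.p b) : a = b := by
  have haT := ha.evictStep.2.1
  have hbT := hb.evictStep.2.1
  rcases lt_trichotomy a b with hab | hab | hab
  · exact absurd (h ▸ hb.evictStep.page_mem) (ha.notMem (a := b - 1) (by lia) (by lia) (by lia))
  · exact hab
  · exact absurd (h ▸ ha.evictStep.page_mem) (hb.notMem (a := a - 1) (by lia) (by lia) (by lia))

end AwayBefore

lemma exists_awayBefore_of_mem_of_notMem (hab : a ≤ b) (hb : b ≤ T) (hx : x ∈ R.C a)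
    (hx' : x ∉ R.C b) : ∃ e, a < e ∧ AwayBefore R e (b + 1) ∧ R.p e = x := by
  induction b, hab using Nat.le_induction with
  | base => exact absurd hx hx'
  | succ b hab ih =>
    by_cases hxb : x ∈ R.C b
    · obtain ⟨hstep, hpage⟩ := CacheRun.evicted_of_mem_of_notMem (Nat.succ_pos b) hb hxb hx'
      exact ⟨b + 1, by lia, ⟨hstep, by lia, fun r h1 h2 => by lia⟩, hpage⟩
    · obtain ⟨e, hae, haway, rfl⟩ := ih (by lia) hxb
      refine ⟨e, hae, ⟨haway.evictStep, by have := haway.lt; lia, fun r h1 h2 hr => ?_⟩, rfl⟩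
      rcases (Nat.lt_succ_iff.1 h2).eq_or_lt with rfl | h2
      · exact hx' (hr ▸ CacheRun.request_mem_cache (Nat.succ_pos b) hb)
      · exact haway.ne r h1 h2 hr

end Runs

section Triggers

variable {k T : ℕ} {σ : ℕ → S} {R : CacheRun S k T σ} {a b i j s t : ℕ}

lemma nextReq_eq_iff (hs : s ≤ T) :
    nextReq σ T i = s ↔ i < s ∧ σ s = σ i ∧ ∀ r, i < r → r < s → σ r ≠ σ i := by
  unfold nextReq
  split_ifs with h
  · rw [Nat.find_eq_iff]
    constructor
    · rintro ⟨⟨his, -, hσ⟩, hmin⟩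
      exact ⟨his, hσ, fun r hir hrs hr => hmin r hrs ⟨hir, hrs.le.trans hs, hr⟩⟩
    · rintro ⟨his, hσ, hmin⟩
      exact ⟨⟨his, hs, hσ⟩, fun r hrs ⟨hir, _, hr⟩ => hmin r hir hrs hr⟩
  · exact ⟨fun h => by lia, fun ⟨his, hσ, _⟩ => absurd ⟨s, his, hs, hσ⟩ h⟩

lemma lt_nextReq_of_mem_lastIdx (hT : t ≤ T) (hi : i ∈ lastIdx R t) : t < nextReq σ T i := by
  obtain ⟨-, -, -, hlast⟩ := mem_lastIdx.1 hi
  by_contra! h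
  obtain ⟨hlt, hσ, -⟩ := (nextReq_eq_iff (h.trans hT)).1 rfl
  exact hlast _ hlt h hσ

lemma EvictsIdx.ne (h : EvictsIdx R t i) (his : i < s) (hst : s ≤ t) : σ s ≠ σ i := by
  obtain ⟨hstep, hi, hpage⟩ := h
  rcases hst.eq_or_lt with rfl | hst
  · exact hpage ▸ hstep.page_ne.symm
  · exact (mem_lastIdx.1 hi).2.2.2 s his (by lia)

lemma EvictsIdx.lt (h : EvictsIdx R t i) : i < t := by
  have := (mem_lastIdx.1 h.2.1).2.1
  have := h.1.1
  lia

lemma EvictsIdx.nextReq_eq_iff (h : EvictsIdx R t i) (hs : s ≤ T) :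
    nextReq σ T i = s ↔ AwayBefore R t s ∧ σ s = R.p t := by
  have hit := h.lt
  rw [Caching.nextReq_eq_iff hs]
  constructor
  · rintro ⟨his, hσ, hmin⟩
    refine ⟨⟨h.1, ?_, fun r hr hrs => h.2.2 ▸ hmin r (hit.trans hr) hrs⟩, hσ.trans h.2.2.symm⟩
    by_contra! hst
    exact h.ne his hst hσ
  · rintro ⟨haway, hσ⟩
    refine ⟨hit.trans haway.lt, hσ.trans h.2.2, fun r hir hrs => ?_⟩
    rcases le_or_gt r t with hrt | htr
    · exact h.ne hir hrt
    · exact h.2.2 ▸ haway.ne r htr hrs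

lemma EvictsIdx.left_unique (ha : EvictsIdx R a i) (hb : EvictsIdx R b i) : a = b := by
  have hpage : R.p a = R.p b := ha.2.2.trans hb.2.2.symm
  have hne {c : ℕ} (hc : EvictsIdx R c i) {d : ℕ} (hd : EvictsIdx R d i) :
      AwayBefore R c (max c d + 1) :=
    ⟨hc.1, by lia, fun r hcr hr => by
      rcases le_or_gt r d with hrd | hdr
      · exact hc.2.2 ▸ hd.ne (hc.lt.trans hcr) hrd
      · lia⟩
  exact (hne ha hb).left_unique (hne hb ha) (by lia) (by lia) hpage

lemma EvictsIdx.right_unique (hi : EvictsIdx R t i) (hj : EvictsIdx R t j) : i = j :=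
  eq_of_mem_lastIdx hi.2.1 hj.2.1 (hi.2.2.symm.trans hj.2.2)

namespace AwayBefore

lemma evictStep_of_request (h : AwayBefore R t s) (hs : s ≤ T) (hσ : σ s = R.p t) :
    EvictStep R s := by
  have hlt := h.lt
  have hnot : R.p t ∉ R.C (s - 1) := h.notMem (by lia) (by lia) (by lia)
  refine ⟨by lia, hs, hσ ▸ hnot, ?_⟩
  refine (CacheRun.card_eq_or_forall_request_mem (by lia)).resolve_right fun hall => hnot ?_
  obtain ⟨r, hr1, hrt, hr⟩ :=
    CacheRun.exists_request_of_mem (by have := h.evictStep.2.1; lia) h.evictStep.page_mem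
  exact hr ▸ hall r hr1 (by lia)

end AwayBefore

lemma triggers_iff : Triggers R t s ↔ AwayBefore R t s ∧ s ≤ T ∧ σ s = R.p t := by
  constructor
  · rintro ⟨i, hi, rfl, j, hj⟩
    have hs := hj.1.2.1
    obtain ⟨haway, hσ⟩ := (hi.nextReq_eq_iff hs).1 rfl
    exact ⟨haway, hs, hσ⟩
  · rintro ⟨haway, hs, hσ⟩
    obtain ⟨i, hi⟩ := haway.evictStep.exists_evictsIdx
    exact ⟨i, hi, ((hi.nextReq_eq_iff hs).2 ⟨haway, hσ⟩).symm,
      (haway.evictStep_of_request hs hσ).exists_evictsIdx⟩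

namespace Triggers

lemma awayBefore (h : Triggers R t s) : AwayBefore R t s := (triggers_iff.1 h).1

lemma le (h : Triggers R t s) : s ≤ T := (triggers_iff.1 h).2.1

lemma request_eq (h : Triggers R t s) : σ s = R.p t := (triggers_iff.1 h).2.2

lemma lt (h : Triggers R t s) : t < s := h.awayBefore.lt

lemma evictStep_left (h : Triggers R t s) : EvictStep R t := h.awayBefore.evictStep

lemma evictStep_right (h : Triggers R t s) : EvictStep R s :=
  h.awayBefore.evictStep_of_request h.le h.request_eq

lemma left_unique (ha : Triggers R a s) (hb : Triggers R b s) : a = b :=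
  ha.awayBefore.left_unique hb.awayBefore hb.lt ha.lt (ha.request_eq.symm.trans hb.request_eq)

lemma right_unique (ha : Triggers R t a) (hb : Triggers R t b) : a = b := by
  rcases lt_trichotomy a b with h | h | h
  · exact absurd ha.request_eq (hb.awayBefore.ne a ha.lt h)
  · exact h
  · exact absurd hb.request_eq (ha.awayBefore.ne b hb.lt h)

lemma lastEvictedWith (h : Triggers R t s) (strat : ℕ → Fin 3) :
    LastEvictedWith R strat s (strat t) := by
  refine ⟨t, h.lt, h.evictStep_left, h.request_eq.symm, rfl, ?_⟩
  rintro r htr hrs ⟨hstep, hpage⟩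
  exact h.awayBefore.notMem (a := r - 1) (by lia) (by lia) (by have := h.le; lia)
    (h.request_eq ▸ hpage ▸ hstep.page_mem)

end Triggers

lemma exists_triggers (hT : t ≤ T) (hmiss : σ t ∉ R.C (t - 1)) (hold : ¬ NewPage σ t) :
    ∃ r, Triggers R r t := by
  simp only [NewPage, not_forall, not_not] at hold
  obtain ⟨s, hs1, hst, hs⟩ := hold
  obtain ⟨e, -, haway, hpage⟩ := exists_awayBefore_of_mem_of_notMem (a := s) (b := t - 1)
    (by lia) (by lia) (hs ▸ CacheRun.request_mem_cache hs1 (by lia)) hmiss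
  rw [Nat.sub_add_cancel (by lia)] at haway
  exact ⟨e, triggers_iff.2 ⟨haway, hT, hpage.symm⟩⟩

lemma EvictStep.awayBefore_or_exists_triggers (h : EvictStep R t) :
    AwayBefore R t (T + 1) ∨ ∃ s, Triggers R t s := by
  by_cases hex : ∃ s, t < s ∧ s ≤ T ∧ σ s = R.p t
  · obtain ⟨hts, hs, hσ⟩ := Nat.find_spec hex
    refine .inr ⟨Nat.find hex, triggers_iff.2 ⟨⟨h, hts, fun r htr hr hσr => ?_⟩, hs, hσ⟩⟩
    exact Nat.find_min hex hr ⟨htr, hr.le.trans hs, hσr⟩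
  · exact .inl ⟨h, Nat.lt_succ_of_le h.2.1, fun r htr hr hσr =>
      hex ⟨r, htr, Nat.lt_succ_iff.1 hr, hσr⟩⟩

/-- The evictions triggered by an eviction at a time in `s`. -/
noncomputable def triggeredBy (R : CacheRun S k T σ) (s : Finset ℕ) : Finset ℕ :=
  {t ∈ Icc 1 T | ∃ r ∈ s, Triggers R r t}

/-- The evictions that trigger an eviction at a time in `s`. -/
noncomputable def triggersInto (R : CacheRun S k T σ) (s : Finset ℕ) : Finset ℕ :=
  {t ∈ Icc 1 T | ∃ r ∈ s, Triggers R t r}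

lemma Triggers.mem_triggeredBy {u : Finset ℕ} (h : Triggers R t s) (ht : t ∈ u) :
    s ∈ triggeredBy R u :=
  mem_filter.2 ⟨mem_Icc.2 ⟨h.evictStep_right.1, h.le⟩, t, ht, h⟩

lemma Triggers.mem_triggersInto {u : Finset ℕ} (h : Triggers R t s) (hs : s ∈ u) :
    t ∈ triggersInto R u :=
  mem_filter.2 ⟨mem_Icc.2 ⟨h.evictStep_left.1, h.evictStep_left.2.1⟩, s, hs, h⟩

lemma card_triggeredBy_le (R : CacheRun S k T σ) (s : Finset ℕ) : #(triggeredBy R s) ≤ #s :=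
  card_le_card_of_forall_subsingleton (fun t r => Triggers R r t)
    (fun _ ht => (mem_filter.1 ht).2) fun _ _ _ ha _ hb => ha.2.right_unique hb.2

lemma card_triggersInto_le (R : CacheRun S k T σ) (s : Finset ℕ) : #(triggersInto R s) ≤ #s :=
  card_le_card_of_forall_subsingleton (fun t r => Triggers R t r)
    (fun _ ht => (mem_filter.1 ht).2) fun _ _ _ ha _ hb => ha.2.left_unique hb.2

end Triggers

section Labels

variable {k T : ℕ} {σ : ℕ → S} {R : CacheRun S k T σ} {ω : ℕ → ℕ} {strat : ℕ → Fin 3} {s t : ℕ}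

/-- The eviction steps at which the strategy with label `c` chooses the evicted page. -/
noncomputable def evictionsLabeled (R : CacheRun S k T σ) (strat : ℕ → Fin 3) (c : Fin 3) :
    Finset ℕ :=
  {t ∈ Icc 1 T | EvictStep R t ∧ strat t = c}

lemma mem_evictionsLabeled {c : Fin 3} :
    t ∈ evictionsLabeled R strat c ↔ EvictStep R t ∧ strat t = c := by
  simp only [evictionsLabeled, mem_filter, mem_Icc, and_iff_right_iff_imp]
  exact fun h => ⟨h.1.1, h.1.2.1⟩

namespace IsAlternatingOracle

lemma label_eq_add_one (hR : IsAlternatingOracle R ω strat) (h : Triggers R s t) :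
    strat t = strat s + 1 := by
  obtain ⟨-, h0, h1, h2⟩ := hR t h.evictStep_right
  have hlast := h.lastEvictedWith strat
  generalize strat s = c at hlast ⊢
  fin_cases c
  · exact h0 hlast
  · exact (h1 hlast).1
  · exact (h2 hlast).1

lemma exists_triggers_of_label_ne_zero (hR : IsAlternatingOracle R ω strat) (h : EvictStep R t)
    (hlabel : strat t ≠ 0) : ∃ s, Triggers R s t :=
  exists_triggers h.2.1 h.2.2.1 fun hnew => hlabel ((hR t h).1 hnew).1

lemma blindChoiceAt (hR : IsAlternatingOracle R ω strat) (h : EvictStep R t)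
    (hlabel : strat t = 0) : BlindChoiceAt R ω t := by
  by_cases hnew : NewPage σ t
  · exact ((hR t h).1 hnew).2
  · obtain ⟨s, hst⟩ := exists_triggers h.2.1 h.2.2.1 hnew
    have hs : strat s = 2 := by
      have := hR.label_eq_add_one hst
      lia
    exact ((hR t h).2.2.2 (hs ▸ hst.lastEvictedWith strat)).2

lemma correctorChoiceAt (hR : IsAlternatingOracle R ω strat) (h : Triggers R s t)
    (hlabel : strat s = 1) : CorrectorChoiceAt R ω t :=
  ((hR t h.evictStep_right).2.2.1 (hlabel ▸ h.lastEvictedWith strat)).2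

lemma misses_le (hR : IsAlternatingOracle R ω strat) (A : CacheRun S k T σ) :
    misses R ≤ misses A + 3 * #(evictionsLabeled R strat 1) := by
  set E := evictionsLabeled R strat 1
  have hcover : missSet R ⊆
      missSet A ∪ (E ∪ (triggeredBy R E ∪ triggeredBy R (triggeredBy R E))) := by
    intro t ht
    obtain ⟨⟨h1, hT⟩, hmiss⟩ := mem_missSet.1 ht
    by_cases hnew : NewPage σ t
    · exact mem_union_left _ (mem_missSet.2 ⟨⟨h1, hT⟩, hnew.notMem h1 hT⟩)
    refine mem_union_right _ ?_
    obtain ⟨s, hst⟩ := exists_triggers hT hmiss hnew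
    have hlabel := hR.label_eq_add_one hst
    obtain hs | hs | hs : strat s = 0 ∨ strat s = 1 ∨ strat s = 2 := by lia
    · exact mem_union_left _ (mem_evictionsLabeled.2 ⟨hst.evictStep_right, by simp [hlabel, hs]⟩)
    · refine mem_union_right _ (mem_union_left _ (hst.mem_triggeredBy ?_))
      exact mem_evictionsLabeled.2 ⟨hst.evictStep_left, hs⟩
    · obtain ⟨r, hrs⟩ := hR.exists_triggers_of_label_ne_zero hst.evictStep_left (by simp [hs])
      have hr : strat r = 1 := by
        have := hR.label_eq_add_one hrs
        lia
      refine mem_union_right _ (mem_union_right _ (hst.mem_triggeredBy (hrs.mem_triggeredBy ?_)))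
      exact mem_evictionsLabeled.2 ⟨hrs.evictStep_left, hr⟩
  calc misses R ≤ #(missSet A ∪ (E ∪ (triggeredBy R E ∪ triggeredBy R (triggeredBy R E)))) :=
        card_le_card hcover
    _ ≤ misses A + (#E + (#E + #E)) := by
      grw [card_union_le, card_union_le, card_union_le, card_triggeredBy_le R (triggeredBy R E),
        card_triggeredBy_le, card_missSet]
    _ = misses A + 3 * #E := by ring

end IsAlternatingOracle

end Labels

section Matching

variable {k T : ℕ} {σ : ℕ → S} {A B : CacheRun S k T σ} {f g : S → S} {t : ℕ} {x y : S}

/-- The pages that `A`, but not `B`, holds after request `t`. -/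
def surplus (A B : CacheRun S k T σ) (t : ℕ) : Finset S := A.C t \ B.C t

lemma mem_surplus : x ∈ surplus A B t ↔ x ∈ A.C t ∧ x ∉ B.C t := mem_sdiff

lemma card_surplus_le (A B : CacheRun S k T σ) (ht : t ≤ T) :
    #(surplus A B t) ≤ #(surplus B A t) := by
  rw [surplus, surplus, card_sdiff_le_card_sdiff_iff]
  rcases CacheRun.card_eq_or_forall_request_mem (R := B) ht with h | h
  · exact (A.card_le t).trans h.ge
  · refine card_le_card fun x hx => ?_
    obtain ⟨s, hs1, hst, rfl⟩ := CacheRun.exists_request_of_mem ht hx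
    exact h s hs1 hst

/-- At time `t`, the map `f` matches each page in the surplus of `A` over `B` with a partner in the
surplus of `B` over `A`. -/
def IsMatching (A B : CacheRun S k T σ) (t : ℕ) (f : S → S) : Prop :=
  Set.MapsTo f (surplus A B t) (surplus B A t) ∧ Set.InjOn f (surplus A B t)

/-- The page whose partner the page `x` should take over when request `t` is processed: the page
evicted by `B` inherits the partner of the requested page, which enters the cache of `B`; every
other page keeps its own partner. -/
noncomputable def partnerSource (B : CacheRun S k T σ) (t : ℕ) (x : S) : S :=
  if EvictStep B t ∧ x = B.p t then σ t else x

/-- The pages that do not take over the intended partner when the matching before request `t` is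
`f` and the one after it is `g`. -/
noncomputable def broken (A B : CacheRun S k T σ) (t : ℕ) (f g : S → S) : Finset S :=
  {x ∈ surplus A B t | g x ≠ f (partnerSource B t x)}

/-- The times at which the matching of `surplus A B` into `surplus B A` may have to change. -/
def Disruptive (A B : CacheRun S k T σ) (t : ℕ) : Prop :=
  σ t ∉ A.C (t - 1) ∨ EvictStep B t ∧ B.p t ∉ A.C t

lemma request_notMem_surplus (h1 : 1 ≤ t) (hT : t ≤ T) : σ t ∉ surplus A B t := fun h =>
  (mem_surplus.1 h).2 (CacheRun.request_mem_cache h1 hT)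

lemma partnerSource_mem_surplus (h1 : 1 ≤ t) (hT : t ≤ T) (hx : x ∈ surplus A B t)
    (h : σ t ∈ A.C (t - 1) ∨ x ≠ B.p t) : partnerSource B t x ∈ surplus A B (t - 1) := by
  obtain ⟨hxA, hxB⟩ := mem_surplus.1 hx
  unfold partnerSource
  split_ifs with hev
  · exact mem_surplus.2 ⟨h.resolve_right (not_not.2 hev.2), hev.1.2.2.1⟩
  · have hne : x ≠ σ t := ne_of_mem_of_not_mem hx (request_notMem_surplus h1 hT)
    refine mem_surplus.2 ⟨(CacheRun.eq_request_or_mem_pred h1 hT hxA).resolve_left hne, ?_⟩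
    intro hxB'
    exact hev ((CacheRun.evicted_of_mem_of_notMem h1 hT hxB' hxB).imp_right Eq.symm)

lemma injOn_partnerSource (h1 : 1 ≤ t) (hT : t ≤ T) :
    Set.InjOn (partnerSource B t) (surplus A B t) := by
  intro x hx y hy hxy
  have hx := ne_of_mem_of_not_mem hx (request_notMem_surplus h1 hT)
  have hy := ne_of_mem_of_not_mem hy (request_notMem_surplus h1 hT)
  unfold partnerSource at hxy
  split_ifs at hxy with hevx hevy hevy
  · exact hevx.2.trans hevy.2.symm
  · exact absurd hxy.symm hy
  · exact absurd hxy hx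
  · exact hxy

lemma disruptive_of_mem_of_notMem_surplus (h1 : 1 ≤ t) (hT : t ≤ T)
    (hy : y ∈ surplus B A (t - 1)) (hy' : y ∉ surplus B A t) :
    Disruptive A B t ∧ y ∈ ({σ t, B.p t} : Finset S) := by
  obtain ⟨hyB, hyA⟩ := mem_surplus.1 hy
  simp only [mem_insert, mem_singleton]
  by_cases hyB' : y ∈ B.C t
  · have hyA' : y ∈ A.C t := by
      by_contra hyA'
      exact hy' (mem_surplus.2 ⟨hyB', hyA'⟩)
    obtain rfl := (CacheRun.eq_request_or_mem_pred h1 hT hyA').resolve_right hyA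
    exact ⟨.inl hyA, .inl rfl⟩
  · obtain ⟨hev, rfl⟩ := CacheRun.evicted_of_mem_of_notMem h1 hT hyB hyB'
    refine ⟨.inr ⟨hev, fun hyA' => ?_⟩, .inr rfl⟩
    exact hev.page_ne ((CacheRun.eq_request_or_mem_pred h1 hT hyA').resolve_right hyA)

lemma IsMatching.exists_succ (h1 : 1 ≤ t) (hT : t ≤ T) (hf : IsMatching A B (t - 1) f) :
    ∃ g, IsMatching A B t g ∧ #(broken A B t f g) ≤ if Disruptive A B t then 3 else 0 := by
  set V : Finset S := {x ∈ surplus A B t |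
    partnerSource B t x ∈ surplus A B (t - 1) ∧ f (partnerSource B t x) ∈ surplus B A t}
  have hinj : ∀ U ⊆ surplus A B t, (∀ x ∈ U, partnerSource B t x ∈ surplus A B (t - 1)) →
      Set.InjOn (f ∘ partnerSource B t) U := fun U hU hmem =>
    hf.2.comp ((injOn_partnerSource h1 hT).mono (coe_subset.2 hU)) hmem
  obtain ⟨g, hgV, hg⟩ := exists_injOn_extension (V := V) (f := f ∘ partnerSource B t)
    (filter_subset _ _) (fun x hx => (mem_filter.1 hx).2.2)
    (hinj V (filter_subset _ _) fun x hx => (mem_filter.1 hx).2.1) (card_surplus_le A B hT)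
  refine ⟨g, hg, ?_⟩
  have hbroken : broken A B t f g ⊆ surplus A B t \ V := fun x hx =>
    mem_sdiff.2 ⟨(mem_filter.1 hx).1, fun hxV => (mem_filter.1 hx).2 (hgV hxV)⟩
  have hlost : ∀ x ∈ surplus A B t \ V, partnerSource B t x ∈ surplus A B (t - 1) →
      Disruptive A B t ∧ f (partnerSource B t x) ∈ ({σ t, B.p t} : Finset S) := by
    intro x hx hsource
    obtain ⟨hx, hxV⟩ := mem_sdiff.1 hx
    exact disruptive_of_mem_of_notMem_surplus h1 hT (hf.1 hsource) fun hf' =>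
      hxV (mem_filter.2 ⟨hx, hsource, hf'⟩)
  refine (card_le_card hbroken).trans ?_
  split_ifs with hdis
  · have hsource : ∀ x ∈ (surplus A B t \ V).erase (B.p t),
        partnerSource B t x ∈ surplus A B (t - 1) := fun x hx =>
      partnerSource_mem_surplus h1 hT (mem_sdiff.1 (mem_of_mem_erase hx)).1
        (.inr (ne_of_mem_erase hx))
    have htwo : #((surplus A B t \ V).erase (B.p t)) ≤ 2 := (card_le_card_of_injOn _
      (fun x hx => (hlost x (mem_of_mem_erase hx) (hsource x hx)).2)
      (hinj _ ((erase_subset _ _).trans sdiff_subset) hsource)).trans card_le_two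
    have := pred_card_le_card_erase (s := surplus A B t \ V) (a := B.p t)
    lia
  · refine (card_eq_zero.2 (eq_empty_of_forall_notMem fun x hx => hdis ?_)).le
    refine (hlost x hx (partnerSource_mem_surplus h1 hT (mem_sdiff.1 hx).1 (.inl ?_))).1
    by_contra hmiss
    exact hdis (.inl hmiss)

/-- The page evicted by `B` at time `t` is requested again, and that request is a hit for `A`. -/
def ReturnsToHit (A B : CacheRun S k T σ) (t : ℕ) : Prop :=
  ∃ s, Triggers B t s ∧ σ s ∈ A.C (s - 1)

lemma ReturnsToHit.page_mem (h : ReturnsToHit A B t) : B.p t ∈ A.C t := by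
  obtain ⟨s, hts, hhit⟩ := h
  by_contra hnot
  have hlt := hts.lt
  refine CacheRun.notMem_of_not_requested hnot (b := s - 1) (by lia) (by have := hts.le; lia)
    (fun r htr hrs => hts.awayBefore.ne r htr (by lia)) (hts.request_eq ▸ hhit)

lemma card_not_returnsToHit_le (A B : CacheRun S k T σ) :
    #{t ∈ Icc 1 T | EvictStep B t ∧ ¬ ReturnsToHit A B t} ≤ 2 * misses A := by
  set never : Finset ℕ := {t ∈ Icc 1 T | AwayBefore B t (T + 1)}
  have hcover : ({t ∈ Icc 1 T | EvictStep B t ∧ ¬ ReturnsToHit A B t} : Finset ℕ) ⊆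
      never ∪ triggersInto B (missSet A) := by
    intro t ht
    obtain ⟨ht, hstep, hnot⟩ := mem_filter.1 ht
    rcases hstep.awayBefore_or_exists_triggers with haway | ⟨s, hts⟩
    · exact mem_union_left _ (mem_filter.2 ⟨ht, haway⟩)
    · refine mem_union_right _ (hts.mem_triggersInto (mem_missSet.2 ⟨⟨?_, hts.le⟩, ?_⟩))
      · exact hts.evictStep_right.1
      · exact fun hhit => hnot ⟨s, hts, hhit⟩
  have hnever : #never ≤ #(missSet A) := by
    refine card_le_card_of_forall_subsingleton (fun t s => σ s = B.p t) (fun t ht => ?_)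
      fun s _ a ha b hb => ?_
    · have hstep := (mem_filter.1 ht).2.evictStep
      obtain ⟨r, hr1, hrt, hr⟩ :=
        CacheRun.exists_request_of_mem (by have := hstep.2.1; lia) hstep.page_mem
      exact hr ▸ exists_mem_missSet_of_request A hr1 (by have := hstep.2.1; lia)
    · have ha' := (mem_filter.1 ha.1).2
      have hb' := (mem_filter.1 hb.1).2
      exact ha'.left_unique hb' (Nat.lt_succ_of_le hb'.evictStep.2.1)
        (Nat.lt_succ_of_le ha'.evictStep.2.1) (ha.2.symm.trans hb.2)
  calc _ ≤ #never + #(triggersInto B (missSet A)) := (card_le_card hcover).trans (card_union_le _ _)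
    _ ≤ misses A + misses A := by grw [hnever, card_triggersInto_le, card_missSet]
    _ = 2 * misses A := (two_mul _).symm

lemma card_disruptive_le (A B : CacheRun S k T σ) :
    #{t ∈ Icc 1 T | Disruptive A B t} ≤ 3 * misses A := by
  calc #{t ∈ Icc 1 T | Disruptive A B t}
      ≤ #(missSet A ∪ {t ∈ Icc 1 T | EvictStep B t ∧ ¬ ReturnsToHit A B t}) := by
        rw [missSet, ← filter_or]
        exact card_le_card <| monotone_filter_right _ fun t _ =>
          Or.imp_right <| And.imp_right fun h hret => h hret.page_mem
    _ ≤ misses A + 2 * misses A := by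
      grw [card_union_le, card_not_returnsToHit_le, card_missSet]
    _ = 3 * misses A := by ring

lemma exists_isMatching (A B : CacheRun S k T σ) :
    ∃ F : ℕ → S → S, (∀ t ≤ T, IsMatching A B t (F t)) ∧
      ∑ t ∈ Icc 1 T, #(broken A B t (F (t - 1)) (F t)) ≤ 9 * misses A := by
  obtain ⟨F, hF⟩ := exists_seq_of_forall_exists_succ (α := S → S)
    (P := fun t f => t ≤ T → IsMatching A B t f)
    (Q := fun t f g => t + 1 ≤ T →
      #(broken A B (t + 1) f g) ≤ if Disruptive A B (t + 1) then 3 else 0)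
    ⟨id, fun _ => by simp [IsMatching, surplus, A.init, B.init]⟩
    (fun t f hf => by
      by_cases hT : t + 1 ≤ T
      · obtain ⟨g, hg, hbroken⟩ := IsMatching.exists_succ (Nat.succ_pos t) hT (hf (by lia))
        exact ⟨g, fun _ => hg, fun _ => hbroken⟩
      · exact ⟨f, fun h => absurd h hT, fun h => absurd h hT⟩)
  refine ⟨F, fun t => (hF t).1, ?_⟩
  calc ∑ t ∈ Icc 1 T, #(broken A B t (F (t - 1)) (F t))
      ≤ ∑ t ∈ Icc 1 T, if Disruptive A B t then 3 else 0 := by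
        refine sum_le_sum fun t ht => ?_
        obtain ⟨h1, hT⟩ := mem_Icc.1 ht
        obtain ⟨r, rfl⟩ := Nat.exists_eq_add_of_le' h1
        exact (hF r).2 hT
    _ = #{t ∈ Icc 1 T | Disruptive A B t} * 3 := by
      rw [← sum_filter, sum_const, smul_eq_mul]
    _ ≤ 9 * misses A := by grw [card_disruptive_le]; lia

end Matching

section Tracking

variable {k T : ℕ} {σ : ℕ → S} {A B : CacheRun S k T σ} {F : ℕ → S → S}

/-- Along the matchings `F`, the page evicted by `B` at time `t` keeps its partner until its next
request at time `s`, which is a hit for `A` and a full-cache miss for `B`. -/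
structure IsTracked (A B : CacheRun S k T σ) (F : ℕ → S → S) (t s : ℕ) : Prop where
  triggers : Triggers B t s
  hit : σ s ∈ A.C (s - 1)
  notMem_broken : ∀ τ, t ≤ τ → τ < s → B.p t ∉ broken A B τ (F (τ - 1)) (F τ)

/-- The evictions of `B` that are not tracked until any time `s`: the exceptions to the rule that
the partner of an evicted page does not change while the page is away. -/
noncomputable def untrackedEvictions (A B : CacheRun S k T σ) (F : ℕ → S → S) : Finset ℕ :=
  {t ∈ Icc 1 T | EvictStep B t ∧ ¬ ∃ s, IsTracked A B F t s}

lemma card_untrackedEvictions_le (A B : CacheRun S k T σ) (F : ℕ → S → S) :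
    #(untrackedEvictions A B F) ≤
      2 * misses A + ∑ τ ∈ Icc 1 T, #(broken A B τ (F (τ - 1)) (F τ)) := by
  set severed : Finset ℕ := {t ∈ Icc 1 T | ∃ s, Triggers B t s ∧
    ∃ τ, t ≤ τ ∧ τ < s ∧ B.p t ∈ broken A B τ (F (τ - 1)) (F τ)}
  have hcover : untrackedEvictions A B F ⊆
      {t ∈ Icc 1 T | EvictStep B t ∧ ¬ ReturnsToHit A B t} ∪ severed := by
    intro t ht
    obtain ⟨ht, hstep, hnot⟩ := mem_filter.1 ht
    by_cases hret : ReturnsToHit A B t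
    · obtain ⟨s, hts, hhit⟩ := hret
      refine mem_union_right _ (mem_filter.2 ⟨ht, s, hts, ?_⟩)
      by_contra! hkeep
      exact hnot ⟨s, hts, hhit, hkeep⟩
    · exact mem_union_left _ (mem_filter.2 ⟨ht, hstep, hret⟩)
  have hsevered : #severed ≤ #((Icc 1 T).sigma fun τ => broken A B τ (F (τ - 1)) (F τ)) := by
    refine card_le_card_of_forall_subsingleton (fun t (x : Σ _ : ℕ, S) => x.2 = B.p t ∧
      ∃ s, Triggers B t s ∧ t ≤ x.1 ∧ x.1 < s) (fun t ht => ?_) ?_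
    · obtain ⟨ht, s, hts, τ, htτ, hτs, hbroken⟩ := mem_filter.1 ht
      have := (mem_Icc.1 ht).1
      have := hts.le
      exact ⟨⟨τ, B.p t⟩, mem_sigma.2 ⟨mem_Icc.2 ⟨by lia, by lia⟩, hbroken⟩, rfl, s, hts, htτ, hτs⟩
    · rintro ⟨τ, x⟩ - a ⟨-, hxa, s, has, haτ, hτs⟩ b ⟨-, hxb, s', hbs', hbτ, hτs'⟩
      exact has.awayBefore.left_unique hbs'.awayBefore (hbτ.trans_lt hτs) (haτ.trans_lt hτs')
        (hxa.symm.trans hxb)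
  calc _ ≤ _ := card_le_card hcover
    _ ≤ _ := by grw [card_union_le, card_not_returnsToHit_le, hsevered, card_sigma]

namespace IsTracked

variable {t t₀ t₁ t₂ s τ : ℕ}

lemma page_mem_surplus (h : IsTracked A B F t s) (htτ : t ≤ τ) (hτs : τ < s) :
    B.p t ∈ surplus A B τ := by
  have hsT := h.triggers.le
  refine mem_surplus.2 ⟨?_, h.triggers.awayBefore.notMem htτ hτs (by lia)⟩
  by_contra hnot
  refine CacheRun.notMem_of_not_requested hnot (b := s - 1) (by lia) (by lia) (fun r hτr hrs => ?_)
    (h.triggers.request_eq ▸ h.hit)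
  exact h.triggers.awayBefore.ne r (by lia) (by lia)

lemma partner_eq_source (h : IsTracked A B F t s) (htτ : t ≤ τ) (hτs : τ < s) :
    F τ (B.p t) = F (τ - 1) (partnerSource B τ (B.p t)) := by
  by_contra hne
  exact h.notMem_broken τ htτ hτs (mem_filter.2 ⟨h.page_mem_surplus htτ hτs, hne⟩)

lemma partner_eq (h : IsTracked A B F t s) (htτ : t ≤ τ) (hτs : τ < s) :
    F τ (B.p t) = F t (B.p t) := by
  induction τ, htτ using Nat.le_induction with
  | base => rfl
  | succ τ htτ ih =>
    have hsource : partnerSource B (τ + 1) (B.p t) = B.p t := if_neg fun ⟨hev, hpage⟩ =>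
      (mem_surplus.1 (h.page_mem_surplus htτ (by lia))).2 (hpage ▸ hev.page_mem)
    rw [h.partner_eq_source (by lia) hτs, hsource, Nat.add_sub_cancel, ih (by lia)]

lemma partner_handoff (h₀₁ : IsTracked A B F t₀ t₁) (h₁₂ : IsTracked A B F t₁ t₂) :
    F t₁ (B.p t₁) = F t₀ (B.p t₀) := by
  have hlt := h₀₁.triggers.lt
  have hsource : partnerSource B t₁ (B.p t₁) = B.p t₀ := by
    rw [partnerSource, if_pos ⟨h₁₂.triggers.evictStep_left, rfl⟩, h₀₁.triggers.request_eq]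
  rw [h₁₂.partner_eq_source le_rfl h₁₂.triggers.lt, hsource, h₀₁.partner_eq (by lia) (by lia)]

lemma eq_of_partner_eq (hF : ∀ t ≤ T, IsMatching A B t (F t)) {t' s' : ℕ}
    (h : IsTracked A B F t s) (h' : IsTracked A B F t' s') (htτ : t ≤ τ) (hτs : τ < s)
    (htτ' : t' ≤ τ) (hτs' : τ < s') (heq : F t (B.p t) = F t' (B.p t')) : t = t' := by
  have hpage : B.p t = B.p t' := by
    refine (hF τ (by have := h.triggers.le; lia)).2 (h.page_mem_surplus htτ hτs)
      (h'.page_mem_surplus htτ' hτs') ?_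
    rw [h.partner_eq htτ hτs, h'.partner_eq htτ' hτs', heq]
  exact h.triggers.awayBefore.left_unique h'.triggers.awayBefore (htτ'.trans_lt hτs)
    (htτ.trans_lt hτs') hpage

end IsTracked

/-- The indices of the requests whose page `A` evicts before it is requested again. -/
noncomputable def lostIdx (A : CacheRun S k T σ) : Finset ℕ :=
  {l ∈ Icc 1 T | ∃ e, EvictsIdx A e l}

lemma card_lostIdx_le (A : CacheRun S k T σ) : #(lostIdx A) ≤ misses A :=
  card_le_card_of_forall_subsingleton (fun l e => EvictsIdx A e l)
    (fun _ hl => by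
      obtain ⟨-, e, he⟩ := mem_filter.1 hl
      exact ⟨e, he.1.mem_missSet, he⟩)
    fun _ _ _ ha _ hb => ha.2.right_unique hb.2

lemma exists_mem_lostIdx_of_mem_surplus {a b : ℕ} {q : S} (ha : 1 ≤ a) (hab : a < b)
    (hb : b ≤ T + 1) (hq : ∀ τ, a ≤ τ → τ < b → q ∈ surplus B A τ) :
    ∃ l ∈ lostIdx A, σ l = q ∧ ∀ τ, a ≤ τ + 1 → τ < b → l ∈ lastIdx B τ := by
  have hnoreq : ∀ r, a ≤ r → r < b → σ r ≠ q := fun r har hrb => by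
    rintro rfl
    exact (mem_surplus.1 (hq r har hrb)).2 (CacheRun.request_mem_cache (by lia) (by lia))
  obtain ⟨hqB, hqA⟩ := mem_surplus.1 (hq a le_rfl hab)
  have hqB' : q ∈ B.C (a - 1) := (CacheRun.eq_request_or_mem_pred ha (by lia) hqB).resolve_left
    (hnoreq a le_rfl hab).symm
  obtain ⟨l, hl, rfl⟩ := exists_mem_lastIdx (by lia) hqB'
  obtain ⟨hl1, hla, -, hlast⟩ := mem_lastIdx.1 hl
  have hlast' : ∀ r, l < r → r < b → σ r ≠ σ l := fun r hlr hrb => by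
    rcases le_or_gt r (a - 1) with hra | har
    · exact hlast r hlr hra
    · exact hnoreq r (by lia) hrb
  obtain ⟨e, hle, haway, hpage⟩ := exists_awayBefore_of_mem_of_notMem (a := l) (b := a)
    (by lia) (by lia) (CacheRun.request_mem_cache hl1 (by lia)) hqA
  have hea := haway.lt
  have hevicts : EvictsIdx A e l := ⟨haway.evictStep, mem_lastIdx.2 ⟨hl1, by lia,
    hpage ▸ haway.evictStep.page_mem, fun r hlr hre => hlast' r hlr (by lia)⟩, hpage⟩
  refine ⟨l, mem_filter.2 ⟨mem_Icc.2 ⟨hl1, by lia⟩, e, hevicts⟩, rfl, fun τ haτ hτb => ?_⟩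
  refine mem_lastIdx.2 ⟨hl1, by lia, ?_, fun r hlr hrτ => hlast' r hlr (by lia)⟩
  rcases haτ.eq_or_lt with rfl | haτ
  · exact hqB'
  · exact (mem_surplus.1 (hq τ (by lia) hτb)).1

lemma IsTracked.exists_common_candidate (hF : ∀ t ≤ T, IsMatching A B t (F t)) {t₀ t₁ t₂ : ℕ}
    (h₀₁ : IsTracked A B F t₀ t₁) (h₁₂ : IsTracked A B F t₁ t₂) :
    ∃ l ∈ lostIdx A, F t₁ (B.p t₁) = σ l ∧ l ∈ lastIdx B (t₀ - 1) ∧ l ∈ lastIdx B (t₂ - 1) := by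
  have hlt₀₁ := h₀₁.triggers.lt
  have hlt₁₂ := h₁₂.triggers.lt
  have ht₀ := h₀₁.triggers.evictStep_left.1
  have ht₂ := h₁₂.triggers.le
  obtain ⟨l, hl, hσ, hlast⟩ := exists_mem_lostIdx_of_mem_surplus (B := B) (A := A) (a := t₀)
    (b := t₂) (q := F t₁ (B.p t₁)) ht₀ (by lia) (by lia) fun τ h₀τ hτ₂ => by
      rcases lt_or_ge τ t₁ with hτ₁ | h₁τ
      · rw [h₀₁.partner_handoff h₁₂, ← h₀₁.partner_eq h₀τ hτ₁]
        exact (hF τ (by lia)).1 (h₀₁.page_mem_surplus h₀τ hτ₁)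
      · rw [← h₁₂.partner_eq h₁τ hτ₂]
        exact (hF τ (by lia)).1 (h₁₂.page_mem_surplus h₁τ hτ₂)
  exact ⟨l, hl, hσ.symm, hlast _ (by lia) (by lia), hlast _ (by lia) (by lia)⟩

end Tracking

section LongEvictions

variable {k T : ℕ} {σ : ℕ → S} {A B : CacheRun S k T σ} {F : ℕ → S → S} {ω : ℕ → ℕ}
  {strat : ℕ → Fin 3} {W h t t₀ t₁ t₂ : ℕ}

/-- The page evicted at time `t` is requested again within the next `h` steps. -/
def ReturnsWithin (R : CacheRun S k T σ) (h t : ℕ) : Prop :=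
  ∃ s, t < s ∧ s ≤ t + h ∧ σ s = R.p t

/-- The times at which `R` evicts an index whose prediction is off by more than `W`. -/
noncomputable def mispredictedEvictions (R : CacheRun S k T σ) (ω : ℕ → ℕ) (W : ℕ) : Finset ℕ :=
  {t ∈ Icc 1 T | ∃ i, EvictsIdx R t i ∧ W < Nat.dist (nextReq σ T i) (ω i)}

lemma EvictsIdx.mem_mispredictedEvictions {R : CacheRun S k T σ} {i : ℕ} (hi : EvictsIdx R t i)
    (hW : W < Nat.dist (nextReq σ T i) (ω i)) : t ∈ mispredictedEvictions R ω W :=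
  mem_filter.2 ⟨mem_Icc.2 ⟨hi.1.1, hi.1.2.1⟩, i, hi, hW⟩

lemma card_mispredictedEvictions_mul_le (R : CacheRun S k T σ) (ω : ℕ → ℕ) (W : ℕ) :
    #(mispredictedEvictions R ω W) * (W + 1) ≤ totalLoss σ T ω := by
  set bad : Finset ℕ := {i ∈ Icc 1 T | W < Nat.dist (nextReq σ T i) (ω i)}
  have hcard : #(mispredictedEvictions R ω W) ≤ #bad := by
    refine card_le_card_of_forall_subsingleton (fun t i => EvictsIdx R t i) (fun t ht => ?_)
      fun _ _ _ ha _ hb => ha.2.left_unique hb.2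
    obtain ⟨-, i, hi, hW⟩ := mem_filter.1 ht
    obtain ⟨hi1, hit, -⟩ := mem_lastIdx.1 hi.2.1
    have := hi.1.2.1
    exact ⟨i, mem_filter.2 ⟨mem_Icc.2 ⟨hi1, by lia⟩, hW⟩, hi⟩
  calc #(mispredictedEvictions R ω W) * (W + 1)
      ≤ #bad • (W + 1) := Nat.mul_le_mul_right _ hcard
    _ ≤ ∑ i ∈ bad, Nat.dist (nextReq σ T i) (ω i) :=
      card_nsmul_le_sum _ _ _ fun i hi => (mem_filter.1 hi).2
    _ ≤ totalLoss σ T ω := sum_le_sum_of_subset (filter_subset _ _)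

/-- The partner of the page evicted at time `t` is the page of an index `l` that `A` loses, and
every time between `t` and the next request of the evicted page is within `W` of `ω l`. -/
def Framed (A B : CacheRun S k T σ) (F : ℕ → S → S) (ω : ℕ → ℕ) (W t : ℕ) : Prop :=
  ∃ s, IsTracked A B F t s ∧ ∃ l ∈ lostIdx A, F t (B.p t) = σ l ∧ ω l ≤ t + W ∧ s ≤ ω l + W

lemma Framed.exists_window (hframed : Framed A B F ω W t) (hlong : ¬ ReturnsWithin B h t) :
    ∃ s, IsTracked A B F t s ∧ t + h < s ∧
      ∃ l ∈ lostIdx A, F t (B.p t) = σ l ∧ ω l ≤ t + W ∧ s ≤ ω l + W := by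
  obtain ⟨s, hts, hl⟩ := hframed
  refine ⟨s, hts, ?_, hl⟩
  by_contra! hsh
  exact hlong ⟨s, hts.triggers.lt, hsh, hts.triggers.request_eq⟩

/-- An index `l` frames at most `2 * W + 1` times, and at each of them the page matched to `σ l`
determines the framed eviction. -/
lemma card_framed_mul_le (hF : ∀ t ≤ T, IsMatching A B t (F t)) {U : Finset ℕ}
    (hframed : ∀ t ∈ U, Framed A B F ω W t) (hlong : ∀ t ∈ U, ¬ ReturnsWithin B h t) :
    #U * (h + 1) ≤ misses A * (2 * W + 1) := by
  have hwindow (t) (ht : t ∈ U) := (hframed t ht).exists_window (hlong t ht)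
  choose! next hnext hlt l hl hpartner hωt hωs using hwindow
  have hcard : #(U ×ˢ range (h + 1)) ≤
      #((lostIdx A).sigma fun l => Icc (ω l - W) (ω l + W)) := by
    refine card_le_card_of_injOn (fun x => ⟨l x.1, x.1 + x.2⟩) ?_ ?_
    · rintro ⟨t, j⟩ hx
      obtain ⟨ht, hj⟩ := mem_product.1 (mem_coe.1 hx)
      have := mem_range.1 hj
      have := hωt t ht
      have := hωs t ht
      have := hlt t ht
      exact mem_coe.2 (mem_sigma.2 ⟨hl t ht, mem_Icc.2 (by constructor <;> lia)⟩)
    · rintro ⟨t, j⟩ hx ⟨t', j'⟩ hx' heq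
      obtain ⟨ht, hj⟩ := mem_product.1 (mem_coe.1 hx)
      obtain ⟨ht', hj'⟩ := mem_product.1 (mem_coe.1 hx')
      obtain ⟨hll, hτ⟩ : l t = l t' ∧ t + j = t' + j' := by simpa using heq
      have := mem_range.1 hj
      have := mem_range.1 hj'
      have := hlt t ht
      have := hlt t' ht'
      obtain rfl : t = t' := (hnext t ht).eq_of_partner_eq hF (hnext t' ht') (τ := t + j)
        (by lia) (by lia) (by lia) (by lia) (by rw [hpartner t ht, hpartner t' ht', hll])
      exact Prod.ext rfl (Nat.add_left_cancel hτ)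
  calc #U * (h + 1) = #(U ×ˢ range (h + 1)) := by rw [card_product, card_range]
    _ ≤ ∑ l ∈ lostIdx A, #(Icc (ω l - W) (ω l + W)) := hcard.trans (card_sigma _ _).le
    _ ≤ #(lostIdx A) * (2 * W + 1) := sum_le_card_nsmul _ _ _ fun l _ => by
      rw [Nat.card_Icc]
      lia
    _ ≤ misses A * (2 * W + 1) := by grw [card_lostIdx_le]

lemma framed_or_mispredicted (hB : IsAlternatingOracle B ω strat)
    (hF : ∀ t ≤ T, IsMatching A B t (F t)) (h₀₁ : IsTracked A B F t₀ t₁)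
    (h₁₂ : IsTracked A B F t₁ t₂) (hlabel : strat t₁ = 1) (W : ℕ) :
    Framed A B F ω W t₁ ∨ t₀ ∈ mispredictedEvictions B ω W ∨
      t₂ ∈ mispredictedEvictions B ω W := by
  obtain ⟨l, hl, hpartner, hl₀, hl₂⟩ := h₀₁.exists_common_candidate hF h₁₂
  rcases lt_or_ge (t₁ + W) (ω l) with hlarge | hωt
  · refine .inr (.inl ?_)
    have hlabel₀ : strat t₀ = 0 := by
      have := hB.label_eq_add_one h₀₁.triggers
      lia
    obtain ⟨i, hi⟩ := h₀₁.triggers.evictStep_left.exists_evictsIdx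
    have hωl : ω l ≤ ω i := hB.blindChoiceAt hi.1 hlabel₀ i hi.2.1 hi.2.2 l hl₀
    have hnext : nextReq σ T i = t₁ := (hi.nextReq_eq_iff h₀₁.triggers.le).2
      ⟨h₀₁.triggers.awayBefore, h₀₁.triggers.request_eq⟩
    refine hi.mem_mispredictedEvictions ?_
    rw [hnext, Nat.dist_eq_sub_of_le (by lia)]
    lia
  rcases lt_or_ge (ω l + W) t₂ with hsmall | hωs
  · refine .inr (.inr ?_)
    obtain ⟨i, hi⟩ := h₁₂.triggers.evictStep_right.exists_evictsIdx
    have hωl : ω i ≤ ω l := ((hB.correctorChoiceAt h₁₂.triggers hlabel).1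
      ⟨l, hl₂, by lia⟩ i hi.2.1 hi.2.2).2 l hl₂ (by lia)
    have hnext : t₂ - 1 < nextReq σ T i :=
      lt_nextReq_of_mem_lastIdx (by have := hi.1.2.1; lia) hi.2.1
    refine hi.mem_mispredictedEvictions ?_
    rw [Nat.dist_eq_sub_of_le_right (by lia)]
    lia
  · exact .inl ⟨t₂, h₁₂, l, hl, hpartner, hωt, hωs⟩

lemma framed_or_mem_of_mem_evictionsLabeled_one (hB : IsAlternatingOracle B ω strat)
    (hF : ∀ t ≤ T, IsMatching A B t (F t)) (W : ℕ) (ht : t ∈ evictionsLabeled B strat 1) :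
    Framed A B F ω W t ∨
      t ∈ untrackedEvictions A B F ∪ (triggeredBy B (untrackedEvictions A B F) ∪
        (triggeredBy B (mispredictedEvictions B ω W) ∪
          triggersInto B (mispredictedEvictions B ω W))) := by
  obtain ⟨hstep, hlabel⟩ := mem_evictionsLabeled.1 ht
  obtain ⟨t₀, htrig⟩ := hB.exists_triggers_of_label_ne_zero hstep (by simp [hlabel])
  have hstep₀ := htrig.evictStep_left
  simp only [mem_union]
  by_cases h₁₂ : ∃ t₂, IsTracked A B F t t₂
  swap
  · exact .inr (.inl (mem_filter.2 ⟨mem_Icc.2 ⟨hstep.1, hstep.2.1⟩, hstep, h₁₂⟩))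
  by_cases h₀₁ : ∃ t₁, IsTracked A B F t₀ t₁
  swap
  · exact .inr (.inr (.inl (htrig.mem_triggeredBy
      (mem_filter.2 ⟨mem_Icc.2 ⟨hstep₀.1, hstep₀.2.1⟩, hstep₀, h₀₁⟩))))
  obtain ⟨t₂, h₁₂⟩ := h₁₂
  obtain ⟨t₁, h₀₁⟩ := h₀₁
  obtain rfl := h₀₁.triggers.right_unique htrig
  rcases framed_or_mispredicted hB hF h₀₁ h₁₂ hlabel W with hframed | hbad | hbad
  · exact .inl hframed
  · exact .inr (.inr (.inr (.inl (htrig.mem_triggeredBy hbad))))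
  · exact .inr (.inr (.inr (.inr (h₁₂.triggers.mem_triggersInto hbad))))

/-- The evictions made by RandomAlg whose page is not requested within the next `h` steps. -/
noncomputable def longRandomEvictions (R : CacheRun S k T σ) (strat : ℕ → Fin 3) (h : ℕ) :
    Finset ℕ :=
  {t ∈ evictionsLabeled R strat 1 | ¬ ReturnsWithin R h t}

lemma card_longRandomEvictions_le (hB : IsAlternatingOracle B ω strat) (A : CacheRun S k T σ)
    (W h : ℕ) : (#(longRandomEvictions B strat h) : ℝ) ≤
      22 * misses A + misses A * (2 * W + 1) / (h + 1) + 2 * (totalLoss σ T ω / (W + 1)) := by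
  obtain ⟨F, hF, hbroken⟩ := exists_isMatching A B
  set untracked := untrackedEvictions A B F
  set framed : Finset ℕ := {t ∈ longRandomEvictions B strat h | Framed A B F ω W t}
  set bad := mispredictedEvictions B ω W
  have hcover : longRandomEvictions B strat h ⊆ framed ∪ (untracked ∪
      (triggeredBy B untracked ∪ (triggeredBy B bad ∪ triggersInto B bad))) := fun t ht =>
    mem_union.2 ((framed_or_mem_of_mem_evictionsLabeled_one hB hF W (mem_filter.1 ht).1).imp_left
      fun hframed => mem_filter.2 ⟨ht, hframed⟩)
  have huntracked : #untracked ≤ 11 * misses A := by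
    have : #untracked ≤ _ := card_untrackedEvictions_le A B F
    lia
  have hcard : #(longRandomEvictions B strat h) ≤ 22 * misses A + #framed + 2 * #bad := by
    grw [hcover, card_union_le, card_union_le, card_union_le, card_union_le,
      card_triggeredBy_le, card_triggeredBy_le, card_triggersInto_le, huntracked]
    lia
  have hframed : (#framed : ℝ) ≤ misses A * (2 * W + 1) / (h + 1) := by
    rw [le_div_iff₀ (by positivity)]
    exact_mod_cast card_framed_mul_le hF (fun t ht => (mem_filter.1 ht).2)
      fun t ht => (mem_filter.1 (mem_filter.1 ht).1).2
  have hbad : (#bad : ℝ) ≤ totalLoss σ T ω / (W + 1) := by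
    rw [le_div_iff₀ (by positivity)]
    exact_mod_cast card_mispredictedEvictions_mul_le B ω W
  calc (#(longRandomEvictions B strat h) : ℝ) ≤ 22 * misses A + #framed + 2 * #bad := by
        exact_mod_cast hcard
    _ ≤ _ := by gcongr

end LongEvictions

section Resampling

variable {k T h t : ℕ} {σ : ℕ → S} {ω : ℕ → ℕ} {R : (Fin (T + 1) → Fin k) → CacheRun S k T σ}
  {strat : (Fin (T + 1) → Fin k) → ℕ → Fin 3} {u u' : Fin (T + 1) → Fin k}

namespace Adapted

lemma lastIdx_eq (hA : Adapted R strat)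
    (huu : ∀ s : Fin (T + 1), (s : ℕ) ≤ t → u s = u' s) : lastIdx (R u) t = lastIdx (R u') t := by
  unfold lastIdx
  rw [(hA u u' t huu).1]

lemma evictStep (hA : Adapted R strat) (huu : ∀ s : Fin (T + 1), (s : ℕ) < t → u s = u' s)
    (ht : EvictStep (R u) t) : EvictStep (R u') t := by
  obtain ⟨h1, hT, hmiss, hfull⟩ := ht
  have hC := (hA u u' (t - 1) fun s hs => huu s (by lia)).1
  exact ⟨h1, hT, hC ▸ hmiss, hC ▸ hfull⟩

lemma mem_evictionsLabeled_one (hA : Adapted R strat)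
    (hR : ∀ u, IsAlternatingOracle (R u) ω (strat u))
    (huu : ∀ s : Fin (T + 1), (s : ℕ) < t → u s = u' s)
    (ht : t ∈ evictionsLabeled (R u) (strat u) 1) :
    t ∈ evictionsLabeled (R u') (strat u') 1 := by
  obtain ⟨hstep, hlabel⟩ := mem_evictionsLabeled.1 ht
  obtain ⟨r, hr⟩ := (hR u).exists_triggers_of_label_ne_zero hstep (by simp [hlabel])
  have hrt := hr.lt
  obtain ⟨-, hpage, hstrat⟩ := hA u u' r fun s hs => huu s (by lia)
  have hr' : Triggers (R u') r t := triggers_iff.2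
    ⟨⟨hA.evictStep (fun s hs => huu s (by lia)) hr.evictStep_left, hrt, hpage ▸ hr.awayBefore.ne⟩,
      hr.le, hpage ▸ hr.request_eq⟩
  refine mem_evictionsLabeled.2 ⟨hA.evictStep huu hstep, ?_⟩
  rw [(hR u').label_eq_add_one hr', ← hstrat, ← (hR u).label_eq_add_one hr, hlabel]

lemma seed_eq_of_page_eq (hA : Adapted R strat)
    (hR : ∀ u, IsAlternatingOracleSeeded (R u) ω (strat u) u) (hT : t < T + 1)
    (huu : ∀ s : Fin (T + 1), (s : ℕ) < t → u s = u' s)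
    (ht : t ∈ evictionsLabeled (R u) (strat u) 1) (ht' : t ∈ evictionsLabeled (R u') (strat u') 1)
    (hpage : (R u).p t = (R u').p t) : u ⟨t, hT⟩ = u' ⟨t, hT⟩ := by
  obtain ⟨hstep, hlabel⟩ := mem_evictionsLabeled.1 ht
  obtain ⟨hstep', hlabel'⟩ := mem_evictionsLabeled.1 ht'
  obtain ⟨i, -, hi, hpi⟩ := hstep.exists_evictsIdx
  have hlast : lastIdx (R u) (t - 1) = lastIdx (R u') (t - 1) :=
    hA.lastIdx_eq fun s hs => huu s (by have := hstep.1; lia)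
  refine Fin.ext ?_
  rw [← (hR u).2 t hstep hlabel i hi hpi, ← (hR u').2 t hstep' hlabel' i (hlast ▸ hi)
    (hpage ▸ hpi), hlast]

lemma card_returnsWithin_update_le (hA : Adapted R strat)
    (hR : ∀ u, IsAlternatingOracleSeeded (R u) ω (strat u) u) (h : ℕ) (hT : t < T + 1)
    (ht : t ∈ evictionsLabeled (R u) (strat u) 1) :
    #{v | ReturnsWithin (R (Function.update u ⟨t, hT⟩ v)) h t} ≤ h := by
  have huu (v w : Fin k) (s : Fin (T + 1)) (hs : (s : ℕ) < t) :
      Function.update u ⟨t, hT⟩ v s = Function.update u ⟨t, hT⟩ w s := by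
    rw [Function.update_of_ne (Fin.ne_of_lt hs), Function.update_of_ne (Fin.ne_of_lt hs)]
  have hmem (v : Fin k) : t ∈ evictionsLabeled (R (Function.update u ⟨t, hT⟩ v))
      (strat (Function.update u ⟨t, hT⟩ v)) 1 :=
    hA.mem_evictionsLabeled_one (fun u => (hR u).1)
      (by simpa only [Function.update_eq_self] using huu (u ⟨t, hT⟩) v) ht
  calc _ ≤ #(Ioc t (t + h)) := by
        refine card_le_card_of_forall_subsingleton
          (fun v s => σ s = (R (Function.update u ⟨t, hT⟩ v)).p t) (fun v hv => ?_) ?_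
        · obtain ⟨s, hts, hsh, hσ⟩ := (mem_filter.1 hv).2
          exact ⟨s, mem_Ioc.2 ⟨hts, hsh⟩, hσ⟩
        · rintro s - v ⟨-, hv⟩ w ⟨-, hw⟩
          simpa only [Function.update_self] using
            hA.seed_eq_of_page_eq hR hT (huu v w) (hmem v) (hmem w) (hv.symm.trans hw)
    _ = h := by simp

lemma card_random_le_two_mul_card_long (hA : Adapted R strat)
    (hR : ∀ u, IsAlternatingOracleSeeded (R u) ω (strat u) u) (hk : 0 < k) (hh : 2 * h ≤ k)
    (hT : t < T + 1) :
    #{u | t ∈ evictionsLabeled (R u) (strat u) 1} ≤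
      2 * #{u | t ∈ longRandomEvictions (R u) (strat u) h} := by
  have hinv (u : Fin (T + 1) → Fin k) (v : Fin k) (s : Fin (T + 1)) (hs : (s : ℕ) < t) :
      Function.update u ⟨t, hT⟩ v s = u s :=
    Function.update_of_ne (Fin.ne_of_lt hs) _ _
  have hshort := card_filter_and_mul_card_le (⟨t, hT⟩ : Fin (T + 1))
    (P := fun u => t ∈ evictionsLabeled (R u) (strat u) 1) (Q := fun u => ReturnsWithin (R u) h t)
    (fun u v => ⟨hA.mem_evictionsLabeled_one (fun u => (hR u).1) (hinv u v),
      hA.mem_evictionsLabeled_one (fun u => (hR u).1) fun s hs => (hinv u v s hs).symm⟩)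
    fun u hu => hA.card_returnsWithin_update_le hR h hT hu
  have hsplit := card_filter_add_card_filter_not
    (s := {u | t ∈ evictionsLabeled (R u) (strat u) 1}) fun u => ReturnsWithin (R u) h t
  simp only [filter_filter] at hsplit
  simp only [longRandomEvictions, mem_filter]
  rw [Fintype.card_fin] at hshort
  have hhalf := Nat.le_of_mul_le_mul_right
    (calc _ * k = 2 * (#{u | t ∈ evictionsLabeled (R u) (strat u) 1 ∧
              ReturnsWithin (R u) h t} * k) := by rw [mul_assoc]
      _ ≤ 2 * (#{u | t ∈ evictionsLabeled (R u) (strat u) 1} * h) := Nat.mul_le_mul_left 2 hshort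
      _ = #{u | t ∈ evictionsLabeled (R u) (strat u) 1} * (2 * h) := by ring
      _ ≤ #{u | t ∈ evictionsLabeled (R u) (strat u) 1} * k := Nat.mul_le_mul_left _ hh) hk
  lia

lemma sum_card_random_le_two_mul_sum_card_long (hA : Adapted R strat)
    (hR : ∀ u, IsAlternatingOracleSeeded (R u) ω (strat u) u) (hk : 0 < k) (hh : 2 * h ≤ k) :
    ∑ u, #(evictionsLabeled (R u) (strat u) 1) ≤
      2 * ∑ u, #(longRandomEvictions (R u) (strat u) h) := by
  have hswap (E : (Fin (T + 1) → Fin k) → Finset ℕ) (hE : ∀ u, E u ⊆ range (T + 1)) :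
      ∑ u, #(E u) = ∑ t ∈ range (T + 1), #{u | t ∈ E u} := by
    refine .trans ?_ (sum_card_bipartiteAbove_eq_sum_card_bipartiteBelow fun u t => t ∈ E u)
    refine sum_congr rfl fun u _ => congrArg card ?_
    exact (filter_mem_eq_inter.trans (inter_eq_right.2 (hE u))).symm
  have hlabeled (u : Fin (T + 1) → Fin k) : evictionsLabeled (R u) (strat u) 1 ⊆ range (T + 1) :=
    fun t ht => mem_range_succ_iff.2 (mem_evictionsLabeled.1 ht).1.2.1
  rw [hswap _ hlabeled, hswap (fun u => longRandomEvictions (R u) (strat u) h)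
    fun u => (filter_subset _ _).trans (hlabeled u), mul_sum]
  exact sum_le_sum fun t ht =>
    hA.card_random_le_two_mul_card_long hR hk hh (mem_range.1 ht)

end Adapted

end Resampling

/-- With `s = √(η n / k)`, the window radius `W = ⌊k s / n⌋` balances the two summands. -/
lemma exists_window {n η k : ℝ} (hn : 0 < n) (hη : 0 ≤ η) (hk : 0 < k) :
    ∃ W : ℕ, n * (2 * W + 1) / (k / 2) + 2 * (η / (W + 1)) ≤ 2 * n / k + 6 * √(η * n / k) := by
  set s := √(η * n / k)
  have hs : s * s = η * n / k := Real.mul_self_sqrt (by positivity)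
  have hη_eq : η = s * (k * s / n) := by
    calc η = s * s * k / n := by rw [hs]; field_simp
      _ = s * (k * s / n) := by ring
  have hfloor : (⌊k * s / n⌋₊ : ℝ) ≤ k * s / n := Nat.floor_le (by positivity)
  have hlt : k * s / n < ⌊k * s / n⌋₊ + 1 := Nat.lt_floor_add_one _
  refine ⟨⌊k * s / n⌋₊, ?_⟩
  have hcount : n * (2 * ⌊k * s / n⌋₊ + 1) / (k / 2) ≤ 2 * n / k + 4 * s := by
    calc n * (2 * ⌊k * s / n⌋₊ + 1) / (k / 2) ≤ n * (2 * (k * s / n) + 1) / (k / 2) := by gcongr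
      _ = 2 * n / k + 4 * s := by field_simp; ring
  have hloss : η / (⌊k * s / n⌋₊ + 1) ≤ s := by
    rw [div_le_iff₀ (by positivity)]
    calc η = s * (k * s / n) := hη_eq
      _ ≤ s * (⌊k * s / n⌋₊ + 1) := by gcongr
  linarith

section Expectation

variable {k T : ℕ} {σ : ℕ → S} {ω : ℕ → ℕ}

lemma one_le_misses (A : CacheRun S k T σ) (hT : 0 < T) : 1 ≤ misses A := by
  rw [← card_missSet]
  exact card_pos.2 ⟨1, mem_missSet.2 ⟨⟨le_rfl, hT⟩, by simp [A.init]⟩⟩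

lemma card_longRandomEvictions_half_le {B : CacheRun S k T σ} {strat : ℕ → Fin 3}
    (hB : IsAlternatingOracle B ω strat) (A : CacheRun S k T σ) (hk : 0 < k) :
    (#(longRandomEvictions B strat (k / 2)) : ℝ) ≤
      24 * misses A + 6 * √(totalLoss σ T ω * misses A / k) := by
  rcases T.eq_zero_or_pos with rfl | hT
  · have hempty : longRandomEvictions B strat (k / 2) = ∅ := by
      simp [longRandomEvictions, evictionsLabeled]
    rw [hempty, card_empty, Nat.cast_zero]
    positivity
  have hn : (0 : ℝ) < misses A := by exact_mod_cast one_le_misses A hT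
  have hk1 : (1 : ℝ) ≤ k := by exact_mod_cast hk
  have hhalf : (k : ℝ) / 2 ≤ (k / 2 : ℕ) + 1 := by
    have : (k : ℝ) ≤ 2 * ((k / 2 : ℕ) + 1) := by exact_mod_cast (by lia : k ≤ 2 * (k / 2 + 1))
    linarith
  obtain ⟨W, hW⟩ := exists_window hn (Nat.cast_nonneg (totalLoss σ T ω)) (zero_lt_one.trans_le hk1)
  calc (#(longRandomEvictions B strat (k / 2)) : ℝ)
      ≤ 22 * misses A + misses A * (2 * W + 1) / ((k / 2 : ℕ) + 1) +
          2 * (totalLoss σ T ω / (W + 1)) := card_longRandomEvictions_le hB A W (k / 2)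
    _ ≤ 22 * misses A + misses A * (2 * W + 1) / (k / 2) +
          2 * (totalLoss σ T ω / (W + 1)) := by gcongr
    _ ≤ 22 * misses A + (2 * misses A / k + 6 * √(totalLoss σ T ω * misses A / k)) := by linarith
    _ ≤ 22 * misses A + (2 * misses A + 6 * √(totalLoss σ T ω * misses A / k)) := by
      gcongr
      exact div_le_self (by positivity) hk1
    _ = 24 * misses A + 6 * √(totalLoss σ T ω * misses A / k) := by ring

theorem stmt15_general {R : (Fin (T + 1) → Fin k) → CacheRun S k T σ}
    {strat : (Fin (T + 1) → Fin k) → ℕ → Fin 3}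
    (hR : ∀ u, IsAlternatingOracleSeeded (R u) ω (strat u) u) (hA : Adapted R strat)
    (hk : 0 < k) (A : CacheRun S k T σ) :
    (∑ u, (misses (R u) : ℝ)) / (k : ℝ) ^ (T + 1) ≤
      145 * misses A + 36 * √(totalLoss σ T ω * misses A / k) := by
  rw [div_le_iff₀ (by positivity)]
  have hrandom : ∑ u, (#(evictionsLabeled (R u) (strat u) 1) : ℝ) ≤
      2 * ∑ u, (#(longRandomEvictions (R u) (strat u) (k / 2)) : ℝ) := by
    exact_mod_cast hA.sum_card_random_le_two_mul_sum_card_long hR hk (Nat.mul_div_le k 2)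
  calc ∑ u, (misses (R u) : ℝ)
      ≤ ∑ u, (misses A + 3 * #(evictionsLabeled (R u) (strat u) 1) : ℝ) :=
        sum_le_sum fun u _ => by exact_mod_cast (hR u).1.misses_le A
    _ = ∑ _u : Fin (T + 1) → Fin k, (misses A : ℝ) +
          3 * ∑ u, (#(evictionsLabeled (R u) (strat u) 1) : ℝ) := by
      rw [sum_add_distrib, ← mul_sum]
    _ ≤ ∑ _u : Fin (T + 1) → Fin k, (misses A : ℝ) +
          3 * (2 * ∑ u, (#(longRandomEvictions (R u) (strat u) (k / 2)) : ℝ)) := by gcongr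
    _ ≤ ∑ _u : Fin (T + 1) → Fin k, (misses A : ℝ) + 3 * (2 * ∑ _u : Fin (T + 1) → Fin k,
          (24 * misses A + 6 * √(totalLoss σ T ω * misses A / k))) := by
      gcongr with u
      exact card_longRandomEvictions_half_le (hR u).1 A hk
    _ = (145 * misses A + 36 * √(totalLoss σ T ω * misses A / k)) * k ^ (T + 1) := by
      simp only [sum_const, card_univ, Fintype.card_fun, Fintype.card_fin, nsmul_eq_mul,
        Nat.cast_pow]
      ring

end Expectation

/-- There is an absolute constant `c` such that for every caching
instance with `k ≥ 10`, the AlternatingOracle strategy (driven by uniform i.i.d. seeds)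
satisfies `E[OBJ_B] ≤ max{230·OPT + 60·√(60·η·OPT/k), c}`. -/
theorem stmt15 :
    ∃ c : ℝ, ∀ (S : Type) [DecidableEq S] (k T : ℕ) (σ : ℕ → S) (ω : ℕ → ℕ)
      (A : CacheRun S k T σ), 10 ≤ k → IsBelady A →
      ∀ (R : (Fin (T + 1) → Fin k) → CacheRun S k T σ)
        (strat : (Fin (T + 1) → Fin k) → ℕ → Fin 3),
        (∀ u, IsAlternatingOracleSeeded (R u) ω (strat u) u) →
        Adapted R strat →
        (∑ u : Fin (T + 1) → Fin k, (misses (R u) : ℝ)) / (k : ℝ) ^ (T + 1) ≤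
          max (230 * misses A +
            60 * Real.sqrt (60 * totalLoss σ T ω * misses A / k)) c := by
  refine ⟨0, fun S _ k T σ ω A hk _ R strat hR hA => le_max_of_le_left ?_⟩
  refine (stmt15_general hR hA (by lia) A).trans ?_
  gcongr
  · norm_num
  · norm_num
  · exact le_mul_of_one_le_left (Nat.cast_nonneg _) (by norm_num)

end Caching
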